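/- arXiv:1303.1286 — 2 statements merged into one kernel-verified Lean document; each statement's English description precedes it below -/
import Mathlib

section
/- Let (W^G, C^G, F^G) be an ℓℓ-extension of a model structure (W,C,F) on a bicomplete category M. Assume that (W,C,F) is right proper and that F^G is invariant in F under W, meaning: for every commutative square with maps u : A → A' and v : B → B' in W and vertical maps f : A → B and g : A' → B' in F satisfying v∘f = g∘u, f is in F^G if and only if g is in F^G. Let f : A → B, g : A → C and h : B → C be maps with g = h∘f, where g is in C^G, f is in C and h is in W. Then f is in C^G. -/
/-!
The class `CG` consists of the maps with the left lifting property against `FG ∩ WG`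
(`cof_of_llp`), so `f` has to be lifted against every `p : X ⟶ Y` in `FG ∩ WG`.

If `Y` is fibrant, such lifts exist (`hasLift_fibrant`). Factor the map `B ⊔_A C' ⟶ C'` given by
`h` and the identity as a cofibration to a mapping cylinder `E` followed by a trivial fibration.
Both `B ⟶ E` and `C' ⟶ E` are then trivial cofibrations. Fibrancy of `Y` extends `B ⟶ Y` to `E`;
the restriction of this extension to `C'` lifts to `X` because `g` is in `CG`; that lift extends
to `E` because `p` is a fibration; restricting to `B` gives the required lift.

For general `Y` (`hasLift_of_replacement`), embed `Y` in a fibrant `Y'` by a trivial cofibration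
and replace `p` by a fibration `p' : X' ⟶ Y'`. Invariance of `FG` puts `p'` in `FG ∩ WG`, and right
properness makes the comparison from `X` to the pullback of `p'` along `Y ⟶ Y'` a weak
equivalence over `Y`. Its factorization into a trivial cofibration and a trivial fibration
transfers lifts against `p'` to lifts against `p`.
-/

open CategoryTheory CategoryTheory.Limits

universe v u v' u'

namespace LLExt

variable {M : Type u} [Category.{v} M]

/-- A class of morphisms has the two-out-of-three property. -/
def TwoOutOfThree (W : MorphismProperty M) : Prop :=
  (∀ ⦃X Y Z : M⦄ (f : X ⟶ Y) (g : Y ⟶ Z), W f → W g → W (f ≫ g)) ∧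
  (∀ ⦃X Y Z : M⦄ (f : X ⟶ Y) (g : Y ⟶ Z), W f → W (f ≫ g) → W g) ∧
  (∀ ⦃X Y Z : M⦄ (f : X ⟶ Y) (g : Y ⟶ Z), W g → W (f ≫ g) → W f)

/-- A class of morphisms is closed under retracts: if `f` is a retract of `g`
(in the arrow category) and `K g`, then `K f`. -/
def ClosedUnderRetracts (K : MorphismProperty M) : Prop :=
  ∀ ⦃A B A' B' : M⦄ (f : A ⟶ B) (g : A' ⟶ B') (i : A ⟶ A') (r : A' ⟶ A)
    (i' : B ⟶ B') (r' : B' ⟶ B),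
    i ≫ r = 𝟙 A → i' ≫ r' = 𝟙 B → f ≫ i' = i ≫ g → g ≫ r' = r ≫ f → K g → K f

/-- A class of morphisms is closed under composition. -/
def ClosedUnderComposition (K : MorphismProperty M) : Prop :=
  ∀ ⦃X Y Z : M⦄ (f : X ⟶ Y) (g : Y ⟶ Z), K f → K g → K (f ≫ g)

/-- A class of morphisms is closed under pushout (cobase change). -/
def ClosedUnderPushouts (K : MorphismProperty M) : Prop :=
  ∀ ⦃Z X Y P : M⦄ (f : Z ⟶ X) (g : Z ⟶ Y) (inl : X ⟶ P) (inr : Y ⟶ P),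
    IsPushout f g inl inr → K f → K inr

/-- A class of morphisms is closed under pullback (base change). -/
def ClosedUnderPullbacks (K : MorphismProperty M) : Prop :=
  ∀ ⦃P X Y Z : M⦄ (fst : P ⟶ X) (snd : P ⟶ Y) (f : X ⟶ Z) (g : Y ⟶ Z),
    IsPullback fst snd f g → K f → K snd

/-- Left properness: the pushout of a map in `W` along a map in `C` is in `W`. -/
def LeftProper (W C : MorphismProperty M) : Prop :=
  ∀ ⦃A X B P : M⦄ (f : A ⟶ X) (i : A ⟶ B) (inl : X ⟶ P) (inr : B ⟶ P),
    IsPushout f i inl inr → W f → C i → W inr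

/-- Right properness: the pullback of a map in `W` along a map in `F` is in `W`. -/
def RightProper (W F : MorphismProperty M) : Prop :=
  ∀ ⦃P X Y Z : M⦄ (fst : P ⟶ X) (snd : P ⟶ Y) (f : X ⟶ Z) (g : Y ⟶ Z),
    IsPullback fst snd f g → W f → F g → W snd

/-- A (Quillen) model structure on a category, given by classes `W` (weak
equivalences), `C` (cofibrations) and `F` (fibrations). -/
structure IsModelStructure (W C F : MorphismProperty M) : Prop where
  weq_twoOutOfThree : TwoOutOfThree W
  weq_retracts : ClosedUnderRetracts W
  cof_retracts : ClosedUnderRetracts C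
  fib_retracts : ClosedUnderRetracts F
  lift_trivCof_fib : ∀ ⦃A B X Y : M⦄ (i : A ⟶ B) (p : X ⟶ Y),
    C i → W i → F p → HasLiftingProperty i p
  lift_cof_trivFib : ∀ ⦃A B X Y : M⦄ (i : A ⟶ B) (p : X ⟶ Y),
    C i → F p → W p → HasLiftingProperty i p
  fact_cof_trivFib : ∀ ⦃X Y : M⦄ (f : X ⟶ Y),
    ∃ (Z : M) (i : X ⟶ Z) (p : Z ⟶ Y), C i ∧ F p ∧ W p ∧ i ≫ p = f
  fact_trivCof_fib : ∀ ⦃X Y : M⦄ (f : X ⟶ Y),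
    ∃ (Z : M) (i : X ⟶ Z) (p : Z ⟶ Y), C i ∧ W i ∧ F p ∧ i ≫ p = f

/-- The retract argument: a map with the left lifting property against trivial fibrations is a
cofibration. -/
lemma cof_of_llp {W C F : MorphismProperty M} (hMS : IsModelStructure W C F) {A B : M} (f : A ⟶ B)
    (hf : ∀ ⦃X Y : M⦄ (p : X ⟶ Y), F p → W p → HasLiftingProperty f p) : C f := by
  obtain ⟨Z, i, p, hi, hpF, hpW, hip⟩ := hMS.fact_cof_trivFib f
  have := hf p hpF hpW
  have sq : CommSq i f p (𝟙 B) := ⟨by simp [hip]⟩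
  exact hMS.cof_retracts f i (𝟙 A) (𝟙 A) sq.lift p (by simp) (by simp)
    (by simp) (by simp [hip]) hi

/-- Lifting against a map `p` of `FG ∩ WG` with fibrant target, by means of the mapping cylinder of
`h` relative to `A`. -/
lemma hasLift_fibrant [HasLimits M] [HasColimits M]
    {W C F WG CG FG : MorphismProperty M}
    (hMS : IsModelStructure W C F) (hG : IsModelStructure WG CG FG)
    (hCsub : ∀ ⦃X Y : M⦄ (f : X ⟶ Y), CG f → C f)
    (hFsub : ∀ ⦃X Y : M⦄ (f : X ⟶ Y), FG f → F f)
    {A B C' : M} (f : A ⟶ B) (h : B ⟶ C') (hg : CG (f ≫ h)) (hf : C f) (hh : W h)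
    {X Y : M} (p : X ⟶ Y) (hpF : FG p) (hpW : WG p) (hY : F (terminal.from Y)) :
    HasLiftingProperty f p := by
  have hP := IsPushout.of_hasPushout f (f ≫ h)
  obtain ⟨E, d, q, hd, hqF, hqW, hdq⟩ :=
    hMS.fact_cof_trivFib (hP.desc h (𝟙 C') (by simp))
  have hj : C (pushout.inl f (f ≫ h) ≫ d) := cof_of_llp hMS _ fun U V r hr hr' => by
    have := hMS.lift_cof_trivFib (f ≫ h) r (hCsub _ hg) hr hr'
    have := hMS.lift_cof_trivFib d r hd hr hr'
    have := hP.hasLiftingProperty r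
    infer_instance
  have hk : C (pushout.inr f (f ≫ h) ≫ d) := cof_of_llp hMS _ fun U V r hr hr' => by
    have := hMS.lift_cof_trivFib f r hf hr hr'
    have := hMS.lift_cof_trivFib d r hd hr hr'
    have := hP.flip.hasLiftingProperty r
    infer_instance
  have hjq : (pushout.inl f (f ≫ h) ≫ d) ≫ q = h := by
    rw [Category.assoc, hdq, hP.inl_desc]
  have hkq : (pushout.inr f (f ≫ h) ≫ d) ≫ q = 𝟙 C' := by
    rw [Category.assoc, hdq, hP.inr_desc]
  have hjk : f ≫ pushout.inl f (f ≫ h) ≫ d = (f ≫ h) ≫ pushout.inr f (f ≫ h) ≫ d := by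
    simp only [← Category.assoc]
    rw [pushout.condition]
  generalize pushout.inl f (f ≫ h) ≫ d = j at *
  generalize pushout.inr f (f ≫ h) ≫ d = k at *
  have hjW : W j := hMS.weq_twoOutOfThree.2.2 j q hqW (hjq ▸ hh)
  -- Two-out-of-three applied to `h ≫ 𝟙 C' = h`.
  have hid : W (𝟙 C') := hMS.weq_twoOutOfThree.2.1 h (𝟙 C') hh (by simpa using hh)
  have hkW : W k := hMS.weq_twoOutOfThree.2.2 k q hqW (hkq ▸ hid)
  have lY := hMS.lift_trivCof_fib j _ hj hjW hY
  have lg := hG.lift_cof_trivFib _ p hg hpF hpW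
  have lk := hMS.lift_trivCof_fib k p hk hkW (hFsub _ hpF)
  refine ⟨fun {a b} sq => ?_⟩
  have sq₁ : CommSq b j (terminal.from Y) (terminal.from E) := ⟨Subsingleton.elim _ _⟩
  have sq₂ : CommSq a (f ≫ h) p (k ≫ sq₁.lift) := ⟨by
    rw [sq.w, ← Category.assoc, ← hjk, Category.assoc, sq₁.fac_left]⟩
  have sq₃ : CommSq sq₂.lift k p sq₁.lift := ⟨sq₂.fac_right⟩
  refine ⟨⟨⟨j ≫ sq₃.lift, ?_, ?_⟩⟩⟩
  · rw [← Category.assoc, hjk, Category.assoc, sq₃.fac_left, sq₂.fac_left]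
  · rw [Category.assoc, sq₃.fac_right, sq₁.fac_left]

/-- Lifts of a cofibration against `p` can be obtained from lifts against a map `p'` receiving a
weak equivalence from `p`: by right properness, `p` is a retract over `Y` of a trivial fibration
followed by the base change of `p'`. -/
lemma hasLift_of_replacement [HasLimits M] {W C F : MorphismProperty M}
    (hMS : IsModelStructure W C F) (hrp : RightProper W F)
    {A B : M} (f : A ⟶ B) (hf : C f) {X Y X' Y' : M} (p : X ⟶ Y) (p' : X' ⟶ Y')
    (x : X ⟶ X') (y : Y ⟶ Y') (hp : F p) (hp' : F p') (hx : W x) (hy : W y)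
    (w : p ≫ y = x ≫ p') [HasLiftingProperty f p'] : HasLiftingProperty f p := by
  have hQ := IsPullback.of_hasPullback y p'
  have hsnd : W (pullback.snd y p') := hrp _ _ _ _ hQ hy hp'
  have hc : W (hQ.lift p x w) :=
    hMS.weq_twoOutOfThree.2.2 _ (pullback.snd y p') hsnd (by rwa [hQ.lift_snd])
  obtain ⟨R, k, r, hkC, hkW, hrF, hkr⟩ := hMS.fact_trivCof_fib (hQ.lift p x w)
  have hrW : W r := hMS.weq_twoOutOfThree.2.1 k r hkW (hkr ▸ hc)
  have lr := hMS.lift_cof_trivFib f r hf hrF hrW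
  have lk := hMS.lift_trivCof_fib k p hkC hkW hp
  have lQ : HasLiftingProperty f (pullback.fst y p') := hQ.flip.hasLiftingProperty f
  have sqR : CommSq (𝟙 X) k p (r ≫ pullback.fst y p') := ⟨by
    rw [← Category.assoc, hkr, hQ.lift_fst, Category.id_comp]⟩
  refine ⟨fun {a b} sq => ?_⟩
  have sqS : CommSq (a ≫ k) f (r ≫ pullback.fst y p') b := ⟨by
    rw [Category.assoc, ← sqR.w, Category.id_comp, sq.w]⟩
  refine ⟨⟨⟨sqS.lift ≫ sqR.lift, ?_, ?_⟩⟩⟩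
  · rw [← Category.assoc, sqS.fac_left, Category.assoc, sqR.fac_left, Category.comp_id]
  · rw [Category.assoc, sqR.fac_right, sqS.fac_right]

/-- Proposition 2.6(2), converse part. -/
theorem prop_2_6_2_second
    [HasLimits M] [HasColimits M]
    (W C F WG CG FG : MorphismProperty M)
    (hMS : IsModelStructure W C F)
    (hG : IsModelStructure WG CG FG)
    (hWsub : ∀ ⦃X Y : M⦄ (f : X ⟶ Y), W f → WG f)
    (hCsub : ∀ ⦃X Y : M⦄ (f : X ⟶ Y), CG f → C f)
    (hFsub : ∀ ⦃X Y : M⦄ (f : X ⟶ Y), FG f → F f)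
    (hrp : RightProper W F)
    (hinv : ∀ ⦃A B A' B' : M⦄ (u : A ⟶ A') (v : B ⟶ B') (f : A ⟶ B) (g : A' ⟶ B'),
      W u → W v → F f → F g → f ≫ v = u ≫ g → (FG f ↔ FG g)) :
    ∀ ⦃A B C' : M⦄ (f : A ⟶ B) (g : A ⟶ C') (h : B ⟶ C'),
      g = f ≫ h → CG g → C f → W h → CG f := by
  rintro A B C' f g h rfl hg hf hh
  refine cof_of_llp hG f fun X Y p hpF hpW => ?_
  obtain ⟨Y', y, t, -, hyW, htF, -⟩ := hMS.fact_trivCof_fib (terminal.from Y)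
  obtain ⟨X', x, p', -, hxW, hpF', hxp⟩ := hMS.fact_trivCof_fib (p ≫ y)
  have hpFG' : FG p' := (hinv x y p p' hxW hyW (hFsub _ hpF) hpF' hxp.symm).1 hpF
  have hpWG' : WG p' := hG.weq_twoOutOfThree.2.1 x p' (hWsub _ hxW)
    (hxp ▸ hG.weq_twoOutOfThree.1 p y hpW (hWsub _ hyW))
  have := hasLift_fibrant hMS hG hCsub hFsub f h hg hf hh p' hpFG' hpWG'
    (Subsingleton.elim t (terminal.from Y') ▸ htF)
  exact hasLift_of_replacement hMS hrp f hf p p' x y (hFsub _ hpF) hpF' hxW hyW hxp.symm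

end LLExt
end

section
/- Let (W_M^G, C_M^G, F_M^G) be an ℓℓ-extension of a model structure (W_M, C_M, F_M) on a bicomplete category M, and let (W_N^G, C_N^G, F_N^G) be an ℓℓ-extension of a model structure (W_N, C_N, F_N) on a bicomplete category N. Let S : M → N and T : N → M be an adjoint pair (S left adjoint) which is a Quillen pair both for the original structures and for the extended structures. Assume that the G-cofibrant objects of M coincide with the cofibrant objects of M, that the G-fibrant objects of N coincide with the fibrant objects of N, and that (S,T) is a Quillen equivalence for the original structures, i.e. for every cofibrant A in M and fibrant X in N, a map SA → X lies in W_N if and only if its adjoint A → TX lies in W_M. Then (S,T) is a Quillen equivalence for the extended structures, i.e. for every G-cofibrant A in M and G-fibrant X in N, a map SA → X lies in W_N^G if and only if its adjoint A → TX lies in W_M^G. -/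
/-!
Let `f : S A ⟶ X` have adjunct `f' : A ⟶ T X`, with `A` cofibrant and `X` fibrant (in either sense).

* If `f` is a `G`-equivalence, factor it in the original structure of `N` as a trivial cofibration
  `i : S A ⟶ Y` followed by a fibration `p : Y ⟶ X`. Then `Y` is fibrant, so the original Quillen
  equivalence makes the adjunct of `i` a weak equivalence, and `p` is a `G`-equivalence between
  `G`-fibrant objects, so `T p` is a `G`-equivalence by Ken Brown's lemma. Hence so is `f'`.
* If `f'` is a `G`-equivalence, factor it dually in the original structure of `M` as a cofibration
  `i : A ⟶ B` followed by a trivial fibration `p : B ⟶ T X`, and argue dually with `S i` and the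
  adjunct of `p`.

Ken Brown's lemma comes from the Brown factorization available for Mathlib's `ModelCategory`.
-/

open CategoryTheory CategoryTheory.Limits

universe v u v' u'

namespace LLExt

variable {M : Type u} [Category.{v} M]

open HomotopicalAlgebra

namespace IsModelStructure

variable {W C F : MorphismProperty M}

lemma weq_id (h : IsModelStructure W C F) (X : M) : W (𝟙 X) := by
  obtain ⟨Z, i, p, -, hi, -, -⟩ := h.fact_trivCof_fib (𝟙 X)
  exact h.weq_twoOutOfThree.2.2 (𝟙 X) i hi (by simpa using hi)

lemma closedUnderRetracts_isStable {K : MorphismProperty M} (hK : ClosedUnderRetracts K) :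
    K.IsStableUnderRetracts where
  of_retract {_ _ _ _ f g} r hg :=
    hK f g r.left.i r.left.r r.right.i r.right.r r.left.retract r.right.retract
      r.i_w.symm r.r_w.symm hg

/-- A model structure on a bicomplete category, as an instance of Mathlib's `ModelCategory`. -/
@[reducible] def modelCategory [HasLimits M] [HasColimits M] (h : IsModelStructure W C F) :
    ModelCategory M :=
  { categoryWithFibrations := ⟨F⟩
    categoryWithCofibrations := ⟨C⟩
    categoryWithWeakEquivalences := ⟨W⟩
    cm2 :=
      { comp_mem := fun f g hf hg => h.weq_twoOutOfThree.1 f g hf hg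
        of_precomp := fun f g hf hfg => h.weq_twoOutOfThree.2.1 f g hf hfg
        of_postcomp := fun f g hg hfg => h.weq_twoOutOfThree.2.2 f g hg hfg }
    cm3a := closedUnderRetracts_isStable h.weq_retracts
    cm3b := closedUnderRetracts_isStable h.fib_retracts
    cm3c := closedUnderRetracts_isStable h.cof_retracts
    cm4a := fun i p hi hw hp => h.lift_trivCof_fib i p hi.mem hw.mem hp.mem
    cm4b := fun i p hi hp hw => h.lift_cof_trivFib i p hi.mem hp.mem hw.mem
    cm5a := ⟨fun f => by
      obtain ⟨Z, i, p, hi, hw, hp, fac⟩ := h.fact_trivCof_fib f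
      exact ⟨⟨Z, i, p, fac, ⟨hi, hw⟩, hp⟩⟩⟩
    cm5b := ⟨fun f => by
      obtain ⟨Z, i, p, hi, hp, hw, fac⟩ := h.fact_cof_trivFib f
      exact ⟨⟨Z, i, p, fac, hi, ⟨hp, hw⟩⟩⟩⟩ }

variable [HasLimits M] [HasColimits M]

lemma cof_comp (h : IsModelStructure W C F) {X Y Z : M} (f : X ⟶ Y) (g : Y ⟶ Z)
    (hf : C f) (hg : C g) : C (f ≫ g) := by
  let := h.modelCategory
  exact (cofibrations M).comp_mem f g hf hg

lemma fib_comp (h : IsModelStructure W C F) {X Y Z : M} (f : X ⟶ Y) (g : Y ⟶ Z)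
    (hf : F f) (hg : F g) : F (f ≫ g) := by
  let := h.modelCategory
  exact (fibrations M).comp_mem f g hf hg

lemma fib_and_weq_of_lift (h : IsModelStructure W C F) {X Y : M} (p : X ⟶ Y)
    (hp : ∀ ⦃A B : M⦄ (i : A ⟶ B), C i → HasLiftingProperty i p) : F p ∧ W p := by
  let := h.modelCategory
  have : (cofibrations M).rlp p := fun _ _ i hi => hp i hi
  rw [MorphismProperty.rlp_eq_of_wfs (cofibrations M) (trivialFibrations M)] at this
  exact this

/-- Ken Brown's lemma: a functor sending trivial cofibrations to weak equivalences sends all weak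
equivalences between cofibrant objects to weak equivalences. -/
lemma brown_cofibrant {N : Type u'} [Category.{v'} N] {W' C' F' : MorphismProperty N}
    (h : IsModelStructure W C F) (h' : IsModelStructure W' C' F') (S : M ⥤ N)
    (hS : ∀ ⦃X Y : M⦄ (f : X ⟶ Y), C f → W f → W' (S.map f))
    {A B : M} (g : A ⟶ B) (hA : C (initial.to A)) (hB : C (initial.to B)) (hg : W g) :
    W' (S.map g) := by
  let := h.modelCategory
  have : IsCofibrant A := ⟨hA⟩
  have : IsCofibrant B := ⟨hB⟩
  have : WeakEquivalence g := ⟨hg⟩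
  obtain ⟨b⟩ : Nonempty (CofibrantBrownFactorization g) := inferInstance
  have hi : W' (S.map b.i) := hS _ b.hi (mem_weakEquivalences b.i)
  have hs : W' (S.map b.s) := hS _ (mem_cofibrations b.s) (mem_weakEquivalences b.s)
  have hp : W' (S.map b.p) := by
    refine h'.weq_twoOutOfThree.2.1 _ _ hs ?_
    rw [← S.map_comp, b.s_p, S.map_id]
    exact h'.weq_id _
  rw [← b.fac, S.map_comp]
  exact h'.weq_twoOutOfThree.1 _ _ hi hp

/-- The dual of Ken Brown's lemma: a functor sending trivial fibrations to weak equivalences sends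
all weak equivalences between fibrant objects to weak equivalences. -/
lemma brown_fibrant {N : Type u'} [Category.{v'} N] {W' C' F' : MorphismProperty N}
    (h : IsModelStructure W C F) (h' : IsModelStructure W' C' F') (T : M ⥤ N)
    (hT : ∀ ⦃X Y : M⦄ (f : X ⟶ Y), F f → W f → W' (T.map f))
    {X Y : M} (g : X ⟶ Y) (hX : F (terminal.from X)) (hY : F (terminal.from Y)) (hg : W g) :
    W' (T.map g) := by
  let := h.modelCategory
  have : IsFibrant X := ⟨hX⟩
  have : IsFibrant Y := ⟨hY⟩
  have : WeakEquivalence g := ⟨hg⟩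
  obtain ⟨b⟩ : Nonempty (FibrantBrownFactorization g) := inferInstance
  have hp : W' (T.map b.p) := hT _ b.hp (mem_weakEquivalences b.p)
  have hr : W' (T.map b.r) := hT _ (mem_fibrations b.r) (mem_weakEquivalences b.r)
  have hi : W' (T.map b.i) := by
    refine h'.weq_twoOutOfThree.2.2 _ _ hr ?_
    rw [← T.map_comp, b.i_r, T.map_id]
    exact h'.weq_id _
  rw [← b.fac, T.map_comp]
  exact h'.weq_twoOutOfThree.1 _ _ hi hp

end IsModelStructure

/-- Corollary 2.8: a Quillen equivalence induces a Quillen equivalence of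
ℓℓ-extensions when the (co)fibrant objects coincide. -/
theorem corollary_2_8
    {N : Type u'} [Category.{v'} N]
    [HasLimits M] [HasColimits M] [HasLimits N] [HasColimits N]
    (WM CM FM WMG CMG FMG : MorphismProperty M)
    (WN CN FN WNG CNG FNG : MorphismProperty N)
    (hM : IsModelStructure WM CM FM)
    (hMG : IsModelStructure WMG CMG FMG)
    (hMWsub : ∀ ⦃X Y : M⦄ (f : X ⟶ Y), WM f → WMG f)
    (hMCsub : ∀ ⦃X Y : M⦄ (f : X ⟶ Y), CMG f → CM f)
    (hMFsub : ∀ ⦃X Y : M⦄ (f : X ⟶ Y), FMG f → FM f)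
    (hN : IsModelStructure WN CN FN)
    (hNG : IsModelStructure WNG CNG FNG)
    (hNWsub : ∀ ⦃X Y : N⦄ (f : X ⟶ Y), WN f → WNG f)
    (hNCsub : ∀ ⦃X Y : N⦄ (f : X ⟶ Y), CNG f → CN f)
    (hNFsub : ∀ ⦃X Y : N⦄ (f : X ⟶ Y), FNG f → FN f)
    (S : M ⥤ N) (T : N ⥤ M) (adj : S ⊣ T)
    (hQcof : ∀ ⦃X Y : M⦄ (f : X ⟶ Y), CM f → CN (S.map f))
    (hQtcof : ∀ ⦃X Y : M⦄ (f : X ⟶ Y), CM f → WM f → CN (S.map f) ∧ WN (S.map f))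
    (hQGcof : ∀ ⦃X Y : M⦄ (f : X ⟶ Y), CMG f → CNG (S.map f))
    (hQGtcof : ∀ ⦃X Y : M⦄ (f : X ⟶ Y), CMG f → WMG f → CNG (S.map f) ∧ WNG (S.map f))
    (hcof : ∀ X : M, CMG (initial.to X) ↔ CM (initial.to X))
    (hfib : ∀ X : N, FNG (terminal.from X) ↔ FN (terminal.from X))
    (heq : ∀ (A : M) (X : N), CM (initial.to A) → FN (terminal.from X) →
      ∀ (f : S.obj A ⟶ X), WN f ↔ WM ((adj.homEquiv A X) f)) :
    ∀ (A : M) (X : N), CMG (initial.to A) → FNG (terminal.from X) →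
      ∀ (f : S.obj A ⟶ X), WNG f ↔ WMG ((adj.homEquiv A X) f) := by
  intro A X hA hX f
  have hA' := (hcof A).1 hA
  have hX' := (hfib X).1 hX
  constructor
  · intro hf
    obtain ⟨Y, i, p, -, hi, hp, rfl⟩ := hN.fact_trivCof_fib f
    have hY' : FN (terminal.from Y) := by
      rw [Subsingleton.elim (terminal.from Y) (p ≫ terminal.from X)]
      exact hN.fib_comp _ _ hp hX'
    have hpG : WNG p := hNG.weq_twoOutOfThree.2.1 _ _ (hNWsub _ hi) hf
    -- `T` preserves `G`-trivial fibrations because its left adjoint preserves `G`-cofibrations.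
    have hTp : WMG (T.map p) :=
      hNG.brown_fibrant hMG T
        (fun _ _ q hq hqw => (hMG.fib_and_weq_of_lift (T.map q) fun _ _ j hj =>
          (adj.hasLiftingProperty_iff j q).1
            (hNG.lift_cof_trivFib _ _ (hQGcof j hj) hq hqw)).2)
        p ((hfib Y).2 hY') hX hpG
    rw [adj.homEquiv_naturality_right]
    exact hMG.weq_twoOutOfThree.1 _ _ (hMWsub _ ((heq A Y hA' hY' i).1 hi)) hTp
  · intro hf
    obtain ⟨B, i, p, hi, -, hp, fac⟩ := hM.fact_cof_trivFib ((adj.homEquiv A X) f)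
    have hB' : CM (initial.to B) := by
      rw [Subsingleton.elim (initial.to B) (initial.to A ≫ i)]
      exact hM.cof_comp _ _ hA' hi
    rw [← fac] at hf
    have hiG : WMG i := hMG.weq_twoOutOfThree.2.2 _ _ (hMWsub _ hp) hf
    have hSi : WNG (S.map i) :=
      hMG.brown_cofibrant hNG S (fun _ _ j hj hjw => (hQGtcof j hj hjw).2)
        i hA ((hcof B).2 hB') hiG
    have hp' : WN ((adj.homEquiv B X).symm p) :=
      (heq B X hB' hX' _).2 (by rwa [Equiv.apply_symm_apply])
    rw [← (adj.homEquiv A X).symm_apply_apply f, ← fac, adj.homEquiv_naturality_left_symm]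
    exact hNG.weq_twoOutOfThree.1 _ _ hSi (hNWsub _ hp')

end LLExt
end
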